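/- Let n ≥ 2. The abelianization UVP_n/[UVP_n, UVP_n] is a free abelian group of rank n(n−1), freely generated by the images of the elements λ_{i,j}, 1 ≤ i ≠ j ≤ n. -/

import Mathlib

/-!  Common setup: the unrestricted virtual braid group `UVB n`, its generators
σ_k, ρ_k (1-based indices), the elements λ_{i,j} and B_{i,j}, the permutation
homomorphism ι (characterized by `IsIota`), the section s : S_n → UVB n
(characterized by `IsPermSection`), and fused Markov equivalence. -/

/-- Generators of the unrestricted virtual braid group `UVB n`:
`Sum.inl i` is the classical generator σ_{i+1} and `Sum.inr i` is the virtual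
generator ρ_{i+1}, for `i : Fin (n-1)` (so the 1-based indices are `1, …, n-1`). -/
abbrev UVBGen (n : ℕ) := Sum (Fin (n - 1)) (Fin (n - 1))

namespace UVBGen
def sg {n : ℕ} (i : Fin (n - 1)) : FreeGroup (UVBGen n) := FreeGroup.of (Sum.inl i)
def rg {n : ℕ} (i : Fin (n - 1)) : FreeGroup (UVBGen n) := FreeGroup.of (Sum.inr i)
end UVBGen

open UVBGen in
/-- The defining relations of the unrestricted virtual braid group. -/
def uvbRels (n : ℕ) : Set (FreeGroup (UVBGen n)) :=
  {r | (∃ i j : Fin (n - 1), (j : ℕ) = (i : ℕ) + 1 ∧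
          (r = sg i * sg j * sg i * (sg j * sg i * sg j)⁻¹ ∨
           r = rg i * rg j * rg i * (rg j * rg i * rg j)⁻¹ ∨
           r = rg i * rg j * sg i * (sg j * rg i * rg j)⁻¹ ∨
           r = rg i * sg j * sg i * (sg j * sg i * rg j)⁻¹ ∨
           r = rg j * sg i * sg j * (sg i * sg j * rg i)⁻¹)) ∨
       (∃ i j : Fin (n - 1), ((i : ℕ) + 2 ≤ (j : ℕ) ∨ (j : ℕ) + 2 ≤ (i : ℕ)) ∧
          (r = sg i * sg j * (sg j * sg i)⁻¹ ∨
           r = rg i * rg j * (rg j * rg i)⁻¹ ∨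
           r = sg i * rg j * (rg j * sg i)⁻¹)) ∨
       (∃ i : Fin (n - 1), r = rg i * rg i)}

/-- The unrestricted virtual braid group on `n` strands. -/
abbrev UVB (n : ℕ) := PresentedGroup (uvbRels n)

namespace UVB

/-- The generator σ_k (1-based index; meaningful for `1 ≤ k ≤ n-1`, junk value `1` otherwise). -/
def sigma (n k : ℕ) : UVB n :=
  if h : 1 ≤ k ∧ k ≤ n - 1 then PresentedGroup.of (Sum.inl ⟨k - 1, by omega⟩) else 1

/-- The generator ρ_k (1-based index; meaningful for `1 ≤ k ≤ n-1`, junk value `1` otherwise). -/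
def rho (n k : ℕ) : UVB n :=
  if h : 1 ≤ k ∧ k ≤ n - 1 then PresentedGroup.of (Sum.inr ⟨k - 1, by omega⟩) else 1

/-- The element λ_{i,j} of `UVB n` (1-based indices `1 ≤ i ≠ j ≤ n`; junk value `1` if `i = j`).
For `i < j`:  `λ_{i,j} = ρ_{j-1}⋯ρ_{i+1} · ρ_i σ_i⁻¹ · ρ_{i+1}⋯ρ_{j-1}` and
`λ_{j,i} = ρ_{j-1}⋯ρ_{i+1} · σ_i⁻¹ ρ_i · ρ_{i+1}⋯ρ_{j-1}`. -/
def lam (n i j : ℕ) : UVB n :=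
  if i < j then
    (((List.range' (i + 1) (j - 1 - i)).reverse.map (rho n)).prod) *
      (rho n i * (sigma n i)⁻¹) *
      (((List.range' (i + 1) (j - 1 - i)).map (rho n)).prod)
  else if j < i then
    (((List.range' (j + 1) (i - 1 - j)).reverse.map (rho n)).prod) *
      ((sigma n j)⁻¹ * rho n j) *
      (((List.range' (j + 1) (i - 1 - j)).map (rho n)).prod)
  else 1

/-- The element `B_{i,j} = ρ_{j-1}ρ_{j-2}⋯ρ_{i+1}ρ_i` for `i < j`, and `1` otherwise. -/
def B (n i j : ℕ) : UVB n :=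
  if i < j then ((List.range' i (j - i)).reverse.map (rho n)).prod else 1

/-- The subgroup `U_j` of `UVB n` generated by `{λ_{i,j}, λ_{j,i} : 1 ≤ i < j}`. -/
def U (n j : ℕ) : Subgroup (UVB n) :=
  Subgroup.closure {x | ∃ i, 1 ≤ i ∧ i < j ∧ (x = lam n i j ∨ x = lam n j i)}

end UVB

/-- `ι : UVB n →* S_n` is the homomorphism sending σ_k and ρ_k to the
transposition (k, k+1) (written 0-based on `Fin n`). -/
def IsIota (n : ℕ) (ι : UVB n →* Equiv.Perm (Fin n)) : Prop :=
  ∀ (k : ℕ) (h1 : 1 ≤ k) (h2 : k ≤ n - 1),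
    ι (UVB.sigma n k) = Equiv.swap ⟨k - 1, by omega⟩ ⟨k, by omega⟩ ∧
    ι (UVB.rho n k) = Equiv.swap ⟨k - 1, by omega⟩ ⟨k, by omega⟩

/-- `s : S_n →* UVB n` is the homomorphism sending the transposition (k, k+1) to ρ_k. -/
def IsPermSection (n : ℕ) (s : Equiv.Perm (Fin n) →* UVB n) : Prop :=
  ∀ (k : ℕ) (h1 : 1 ≤ k) (h2 : k ≤ n - 1),
    s (Equiv.swap ⟨k - 1, by omega⟩ ⟨k, by omega⟩) = UVB.rho n k

/-- The number of orbits of a permutation of `Fin n`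
(= number of fixed points + number of nontrivial cycles). -/
def numOrbits {n : ℕ} (π : Equiv.Perm (Fin n)) : ℕ :=
  (Finset.univ.filter fun x => π x = x).card + π.cycleType.card

namespace UVB

private def embedGen (n : ℕ) : UVBGen n → UVBGen (n + 1)
  | Sum.inl i => Sum.inl ⟨i.val, by have := i.isLt; omega⟩
  | Sum.inr i => Sum.inr ⟨i.val, by have := i.isLt; omega⟩

open UVBGen in
/-- The natural inclusion `UVB n →* UVB (n+1)` (σ_k ↦ σ_k, ρ_k ↦ ρ_k). -/
def incl (n : ℕ) : UVB n →* UVB (n + 1) :=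
  PresentedGroup.toGroup (f := fun x => PresentedGroup.of (embedGen n x)) (by
    have key : (FreeGroup.lift fun x => (PresentedGroup.of (embedGen n x) : UVB (n + 1)))
        = (PresentedGroup.mk (uvbRels (n + 1))).comp (FreeGroup.map (embedGen n)) := by
      ext x
      simp [PresentedGroup.of]
    intro r hr
    rw [key]
    simp only [MonoidHom.comp_apply]
    have hmem : FreeGroup.map (embedGen n) r ∈ uvbRels (n + 1) := by
      have hsg : ∀ i : Fin (n - 1), FreeGroup.map (embedGen n) (sg i)
          = sg (⟨i.val, by have := i.isLt; omega⟩ : Fin (n + 1 - 1)) := by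
        intro i; simp [sg, embedGen]
      have hrg : ∀ i : Fin (n - 1), FreeGroup.map (embedGen n) (rg i)
          = rg (⟨i.val, by have := i.isLt; omega⟩ : Fin (n + 1 - 1)) := by
        intro i; simp [rg, embedGen]
      rcases hr with ⟨i, j, hij, hc⟩ | ⟨i, j, hij, hc⟩ | ⟨i, hc⟩
      · refine Or.inl ⟨⟨i.val, by have := i.isLt; omega⟩, ⟨j.val, by have := j.isLt; omega⟩,
          by simpa using hij, ?_⟩
        rcases hc with h | h | h | h | h <;> subst h <;>
          simp only [map_mul, map_inv, hsg, hrg] <;> tauto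
      · refine Or.inr (Or.inl ⟨⟨i.val, by have := i.isLt; omega⟩, ⟨j.val, by have := j.isLt; omega⟩,
          by simpa using hij, ?_⟩)
        rcases hc with h | h | h <;> subst h <;>
          simp only [map_mul, map_inv, hsg, hrg] <;> tauto
      · refine Or.inr (Or.inr ⟨⟨i.val, by have := i.isLt; omega⟩, ?_⟩)
        subst hc
        simp only [map_mul, hsg, hrg]
    exact (QuotientGroup.eq_one_iff _).mpr (Subgroup.subset_normalClosure hmem))

end UVB

/-- The elementary fused Markov moves on the disjoint union of the groups `UVB n`:
conjugation, and the three right stabilizations (positive, negative, virtual). -/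
inductive MarkovBase : (Σ n, UVB n) → (Σ n, UVB n) → Prop
  | conj (n : ℕ) (α γ : UVB n) : MarkovBase ⟨n, α⟩ ⟨n, γ * α * γ⁻¹⟩
  | stabPos (n : ℕ) (α : UVB n) :
      MarkovBase ⟨n, α⟩ ⟨n + 1, UVB.incl n α * UVB.sigma (n + 1) n⟩
  | stabNeg (n : ℕ) (α : UVB n) :
      MarkovBase ⟨n, α⟩ ⟨n + 1, UVB.incl n α * (UVB.sigma (n + 1) n)⁻¹⟩
  | stabVirt (n : ℕ) (α : UVB n) :
      MarkovBase ⟨n, α⟩ ⟨n + 1, UVB.incl n α * UVB.rho (n + 1) n⟩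

/-- Fused Markov equivalence: the smallest equivalence relation generated by the
elementary Markov moves.  By Kamada's theorem, two unrestricted virtual braids are
fused Markov equivalent iff their closures are equivalent fused links. -/
def Markov : (Σ n, UVB n) → (Σ n, UVB n) → Prop := Relation.EqvGen MarkovBase

/-! ## Statement 14 -/

private lemma val_add_one_ne {n : ℕ} {a b : Fin n} (h : a ≠ b) :
    a.val + 1 ≠ b.val + 1 := by
  intro hc
  exact h (Fin.ext (by omega))

/-!
The `ρ_k` satisfy the Coxeter relations of `S_n`, so the subgroup `⟨ρ⟩` they generate is carried
isomorphically onto `S_n` by `ι`. Conjugation by `⟨ρ⟩` permutes the `λ_{i,j}` through the action of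
`S_n` on pairs: every `λ_{i,j}` is conjugate to `λ_{1,2}`, and the stabilizer `⟨ρ_3, …, ρ_{n-1}⟩` of
the pair `(1, 2)` commutes with `λ_{1,2}`. Since `σ_k = λ_{k,k+1}⁻¹ ρ_k`, it follows that
`UVB n = ⟨λ⟩ ⟨ρ⟩` with `⟨λ⟩` normal, and hence that `ker ι = ⟨λ⟩`.

That the `λ_{i,j}` are independent in the abelianization of `ker ι` is seen by mapping `UVB n` to
the semidirect product of `S_n` with the free abelian group on the pairs `(i, j)`, via
`ρ_k ↦ (k, k+1)` and `σ_k ↦ λ_{k,k+1}⁻¹ (k, k+1)`: on `ker ι` this is a homomorphism to the free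
abelian group that takes each `λ_{i,j}` to the corresponding basis element.
-/

open Equiv (Perm swap)
open Multiplicative (ofAdd)

/-- The free abelian group on `X`, written multiplicatively so that it can be the target of
homomorphisms from multiplicative groups. -/
abbrev MulFreeAb (X : Type*) := Multiplicative (FreeAbelianGroup X)

namespace MulFreeAb

variable {X : Type*}

/-- The basis element of `MulFreeAb X` attached to `x`. -/
abbrev of (x : X) : MulFreeAb X := ofAdd (FreeAbelianGroup.of x)

theorem hom_ext {A : Type*} [CommGroup A] {f g : MulFreeAb X →* A}
    (h : ∀ x, f (of x) = g (of x)) : f = g :=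
  MonoidHom.toAdditiveRight.injective (FreeAbelianGroup.lift_ext _ _ h)

/-- The homomorphism from `MulFreeAb X` to a commutative group with prescribed values on the
basis. -/
def lift {A : Type*} [CommGroup A] (c : X → A) : MulFreeAb X →* A :=
  AddMonoidHom.toMultiplicativeLeft (FreeAbelianGroup.lift fun x => Additive.ofMul (c x))

theorem lift_of {A : Type*} [CommGroup A] (c : X → A) (x : X) : lift c (of x) = c x :=
  FreeAbelianGroup.lift_apply_of (fun x => Additive.ofMul (c x)) x

/-- The action of `H` on `MulFreeAb X` by automorphisms that permutes the basis through a given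
action of `H` on `X`. -/
def action (H X : Type*) [Group H] [MulAction H X] : H →* MulAut (MulFreeAb X) where
  toFun h := AddEquiv.toMultiplicative (FreeAbelianGroup.equivOfEquiv (MulAction.toPerm h))
  map_one' := MulEquiv.toMonoidHom_injective <| hom_ext fun x =>
    congrArg ofAdd ((FreeAbelianGroup.map_of_apply x).trans (congrArg _ (one_smul H x)))
  map_mul' g h := MulEquiv.toMonoidHom_injective <| hom_ext fun x =>
    congrArg ofAdd ((FreeAbelianGroup.map_of_apply x).trans (congrArg _ (mul_smul g h x)))

theorem action_of {H : Type*} [Group H] [MulAction H X] (h : H) (x : X) :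
    action H X h (of x) = of (h • x) :=
  congrArg ofAdd (FreeAbelianGroup.map_of_apply x)

end MulFreeAb

theorem exists_abelianization_mulEquiv_mulFreeAb {G κ : Type*} [Group G] {c : κ → G}
    (hc : Subgroup.closure (Set.range c) = ⊤) (f : G →* MulFreeAb κ)
    (hf : ∀ k, f (c k) = MulFreeAb.of k) :
    ∃ e : Abelianization G ≃* MulFreeAb κ,
      ∀ k, e (Abelianization.of (c k)) = MulFreeAb.of k := by
  let g : MulFreeAb κ →* Abelianization G := MulFreeAb.lift fun k => Abelianization.of (c k)
  have hg (k) : g (MulFreeAb.of k) = Abelianization.of (c k) := MulFreeAb.lift_of _ k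
  have hgf : g.comp (Abelianization.lift f) = MonoidHom.id _ := by
    refine Abelianization.hom_ext _ _ (MonoidHom.eq_of_eqOn_dense hc ?_)
    rintro _ ⟨k, rfl⟩
    simp [hf, hg]
  have hfg : (Abelianization.lift f).comp g = MonoidHom.id _ :=
    MulFreeAb.hom_ext fun k => by simp [hf, hg]
  exact ⟨MonoidHom.toMulEquiv _ g hgf hfg, hf⟩

/-- The first component of a homomorphism to a semidirect product. It is multiplicative on the
kernel of the second component. -/
def leftOnKer {G N H : Type*} [Group G] [Group N] [Group H] {φ : H →* MulAut N}
    (f : G →* N ⋊[φ] H) : (SemidirectProduct.rightHom.comp f).ker →* N where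
  toFun x := (f x).left
  map_one' := by simp
  map_mul' x y := by
    have hx : (f x).right = 1 := x.2
    simp [hx]

theorem ker_le_of_sup_eq_top {G K : Type*} [Group G] [Group K] (f : G →* K)
    {N H : Subgroup G} (hN : N ≤ f.ker) (hNorm : H ≤ Subgroup.normalizer N) (hsup : N ⊔ H = ⊤)
    (hH : ∀ h ∈ H, f h = 1 → h = 1) : f.ker ≤ N := by
  have : N.Normal :=
    Subgroup.normalizer_eq_top_iff.mp (top_le_iff.mp (hsup ▸ sup_le Subgroup.le_normalizer hNorm))
  intro g hg
  obtain ⟨y, hy, h, hh, rfl⟩ := Subgroup.mem_sup_of_normal_left.mp (hsup ▸ Subgroup.mem_top g)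
  have hfh : f h = 1 := by
    rwa [MonoidHom.mem_ker, map_mul, MonoidHom.mem_ker.mp (hN hy), one_mul] at hg
  rwa [hH h hh hfh, mul_one]

theorem swap_braid {α : Type*} [DecidableEq α] {a b c : α} (hab : a ≠ b) (hbc : b ≠ c)
    (hac : a ≠ c) :
    swap a b * swap b c * swap a b = swap b c * swap a b * swap b c := by
  rw [Equiv.swap_mul_swap_mul_swap hab hac, Equiv.swap_comm a b, Equiv.swap_comm b c,
    Equiv.swap_mul_swap_mul_swap hbc.symm hac.symm, Equiv.swap_comm]

theorem range'_succ_sub_eq_append {i j : ℕ} (h : i < j) :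
    List.range' (i + 1) (j - i) = List.range' (i + 1) (j - 1 - i) ++ [j] := by
  obtain ⟨d, rfl⟩ := Nat.exists_eq_add_of_lt h
  simp only [show i + d + 1 - i = d + 1 by omega, show i + d + 1 - 1 - i = d by omega,
    List.range'_1_concat, add_right_comm]

/-- Ordered pairs of distinct elements of `α`, the index set of the generators `λ_{i,j}`. -/
abbrev DistinctPair (α : Type*) := {p : α × α // p.1 ≠ p.2}

namespace DistinctPair

theorem natCard_eq (α : Type*) [Finite α] :
    Nat.card (DistinctPair α) = Nat.card α * (Nat.card α - 1) := by
  classical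
  have := Fintype.ofFinite α
  have h : (Finset.univ.filter fun p : α × α => p.1 ≠ p.2) = Finset.univ.offDiag := by
    ext; simp
  rw [Nat.card_eq_fintype_card, Fintype.card_subtype, h, Finset.offDiag_card, Finset.card_univ,
    Nat.card_eq_fintype_card, Nat.mul_sub, mul_one]

variable {α : Type*}

instance : MulAction (Perm α) (DistinctPair α) where
  smul π p := ⟨(π p.1.1, π p.1.2), π.injective.ne p.2⟩
  one_smul _ := rfl
  mul_smul _ _ _ := rfl

theorem smul_mk (π : Perm α) {a b : α} (h : a ≠ b) :
    π • (⟨(a, b), h⟩ : DistinctPair α) = ⟨(π a, π b), π.injective.ne h⟩ := rfl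

variable (α) in
/-- The permutations of `α` acting on the free abelian group on ordered pairs of distinct elements:
for `α = Fin n` this is `UVB n` with the `λ_{i,j}` made to commute. -/
abbrev PermSemidirect :=
  MulFreeAb (DistinctPair α) ⋊[MulFreeAb.action (Perm α) (DistinctPair α)] Perm α

variable [DecidableEq α]

/-- The image of `ρ_i` in `PermSemidirect`, where `p = (i, i + 1)`. -/
def rhoImage (p : DistinctPair α) : PermSemidirect α := ⟨1, swap p.1.1 p.1.2⟩

/-- The image of `σ_i` in `PermSemidirect`, where `p = (i, i + 1)`: as `λ_{i,i+1} = ρ_i σ_i⁻¹`, it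
is `λ_{i,i+1}⁻¹ ρ_i`. -/
def sigmaImage (p : DistinctPair α) : PermSemidirect α :=
  ⟨(MulFreeAb.of p)⁻¹, swap p.1.1 p.1.2⟩

theorem rhoImage_mul_self (p : DistinctPair α) : rhoImage p * rhoImage p = 1 := by
  ext <;> simp [rhoImage]

theorem braid_relations {a b c : α} (hab : a ≠ b) (hbc : b ≠ c) (hac : a ≠ c) :
    let p : DistinctPair α := ⟨(a, b), hab⟩
    let q : DistinctPair α := ⟨(b, c), hbc⟩
    sigmaImage p * sigmaImage q * sigmaImage p = sigmaImage q * sigmaImage p * sigmaImage q ∧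
    rhoImage p * rhoImage q * rhoImage p = rhoImage q * rhoImage p * rhoImage q ∧
    rhoImage p * rhoImage q * sigmaImage p = sigmaImage q * rhoImage p * rhoImage q ∧
    rhoImage p * sigmaImage q * sigmaImage p = sigmaImage q * sigmaImage p * rhoImage q ∧
    rhoImage q * sigmaImage p * sigmaImage q = sigmaImage p * sigmaImage q * rhoImage p := by
  have hc : swap a b c = c := Equiv.swap_apply_of_ne_of_ne hac.symm hbc.symm
  have ha : swap b c a = a := Equiv.swap_apply_of_ne_of_ne hab hac
  refine ⟨?_, ?_, ?_, ?_, ?_⟩ <;> refine SemidirectProduct.ext ?_ ?_ <;>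
    simp only [sigmaImage, rhoImage, SemidirectProduct.mul_left, SemidirectProduct.mul_right,
      swap_braid hab hbc hac, map_mul, map_inv, map_one, MulAut.mul_apply, MulFreeAb.action_of,
      smul_mk, Equiv.swap_apply_left, Equiv.swap_apply_right, hc, ha, one_mul, mul_one]
  · exact (mul_comm _ _).trans ((congrArg _ (mul_comm _ _)).trans (mul_assoc _ _ _).symm)
  · exact mul_comm _ _
  · exact mul_comm _ _

theorem far_relations {a b c d : α} (hab : a ≠ b) (hcd : c ≠ d) (hac : a ≠ c) (had : a ≠ d)
    (hbc : b ≠ c) (hbd : b ≠ d) :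
    let p : DistinctPair α := ⟨(a, b), hab⟩
    let q : DistinctPair α := ⟨(c, d), hcd⟩
    sigmaImage p * sigmaImage q = sigmaImage q * sigmaImage p ∧
    rhoImage p * rhoImage q = rhoImage q * rhoImage p ∧
    sigmaImage p * rhoImage q = rhoImage q * sigmaImage p := by
  have hswap : swap a b * swap c d = swap c d * swap a b :=
    (Perm.disjoint_swap_swap (by simp [*])).commute
  have ha : swap c d a = a := Equiv.swap_apply_of_ne_of_ne hac had
  have hb : swap c d b = b := Equiv.swap_apply_of_ne_of_ne hbc hbd
  have hc : swap a b c = c := Equiv.swap_apply_of_ne_of_ne hac.symm hbc.symm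
  have hd : swap a b d = d := Equiv.swap_apply_of_ne_of_ne had.symm hbd.symm
  refine ⟨?_, ?_, ?_⟩ <;> refine SemidirectProduct.ext ?_ ?_ <;>
    simp only [sigmaImage, rhoImage, SemidirectProduct.mul_left, SemidirectProduct.mul_right,
      hswap, map_inv, map_one, MulFreeAb.action_of, smul_mk, ha, hb, hc, hd, one_mul, mul_one]
  exact mul_comm _ _

end DistinctPair

namespace UVB

variable {n : ℕ}

theorem sigma_val_add_one (i : Fin (n - 1)) :
    sigma n (i + 1) = PresentedGroup.of (Sum.inl i) :=
  dif_pos ⟨by omega, by omega⟩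

theorem rho_val_add_one (i : Fin (n - 1)) : rho n (i + 1) = PresentedGroup.of (Sum.inr i) :=
  dif_pos ⟨by omega, by omega⟩

theorem sigma_eq_one {k : ℕ} (h : ¬(1 ≤ k ∧ k ≤ n - 1)) : sigma n k = 1 := dif_neg h

theorem rho_eq_one {k : ℕ} (h : ¬(1 ≤ k ∧ k ≤ n - 1)) : rho n k = 1 := dif_neg h

theorem exists_eq_val_add_one {k : ℕ} (h : 1 ≤ k ∧ k ≤ n - 1) : ∃ i : Fin (n - 1), k = i + 1 :=
  ⟨⟨k - 1, by omega⟩, (Nat.sub_add_cancel h.1).symm⟩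

theorem rho_mul_self (k : ℕ) : rho n k * rho n k = 1 := by
  by_cases h : 1 ≤ k ∧ k ≤ n - 1
  · obtain ⟨i, rfl⟩ := exists_eq_val_add_one h
    rw [rho_val_add_one]
    exact PresentedGroup.one_of_mem (Or.inr (Or.inr ⟨i, rfl⟩))
  · rw [rho_eq_one h, one_mul]

theorem rho_inv (k : ℕ) : (rho n k)⁻¹ = rho n k :=
  inv_eq_of_mul_eq_one_left (rho_mul_self k)

theorem rho_comm {k l : ℕ} (h : k + 2 ≤ l ∨ l + 2 ≤ k) : Commute (rho n k) (rho n l) := by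
  by_cases hk : 1 ≤ k ∧ k ≤ n - 1
  · by_cases hl : 1 ≤ l ∧ l ≤ n - 1
    · obtain ⟨i, rfl⟩ := exists_eq_val_add_one hk
      obtain ⟨j, rfl⟩ := exists_eq_val_add_one hl
      rw [rho_val_add_one, rho_val_add_one]
      exact PresentedGroup.mk_eq_mk_of_mul_inv_mem
        (Or.inr (Or.inl ⟨i, j, by omega, Or.inr (Or.inl rfl)⟩))
    · exact rho_eq_one hl ▸ Commute.one_right _
  · exact rho_eq_one hk ▸ Commute.one_left _

theorem sigma_rho_comm {k l : ℕ} (h : k + 2 ≤ l ∨ l + 2 ≤ k) :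
    Commute (sigma n k) (rho n l) := by
  by_cases hk : 1 ≤ k ∧ k ≤ n - 1
  · by_cases hl : 1 ≤ l ∧ l ≤ n - 1
    · obtain ⟨i, rfl⟩ := exists_eq_val_add_one hk
      obtain ⟨j, rfl⟩ := exists_eq_val_add_one hl
      rw [sigma_val_add_one, rho_val_add_one]
      exact PresentedGroup.mk_eq_mk_of_mul_inv_mem
        (Or.inr (Or.inl ⟨i, j, by omega, Or.inr (Or.inr rfl)⟩))
    · exact rho_eq_one hl ▸ Commute.one_right _
  · exact sigma_eq_one hk ▸ Commute.one_left _

theorem rho_braid {k : ℕ} (h1 : 1 ≤ k) (h2 : k + 1 < n) :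
    rho n k * rho n (k + 1) * rho n k = rho n (k + 1) * rho n k * rho n (k + 1) := by
  obtain ⟨i, rfl⟩ := exists_eq_val_add_one (n := n) ⟨h1, by omega⟩
  obtain ⟨j, hj⟩ := exists_eq_val_add_one (n := n) (k := i + 1 + 1) ⟨by omega, by omega⟩
  rw [hj, rho_val_add_one, rho_val_add_one]
  exact PresentedGroup.mk_eq_mk_of_mul_inv_mem
    (Or.inl ⟨i, j, by omega, Or.inr (Or.inl rfl)⟩)

theorem semiconjBy_rho_mul_rho {k : ℕ} (h1 : 1 ≤ k) (h2 : k + 1 < n) :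
    SemiconjBy (rho n k * rho n (k + 1)) (sigma n k) (sigma n (k + 1)) := by
  obtain ⟨i, rfl⟩ := exists_eq_val_add_one (n := n) ⟨h1, by omega⟩
  obtain ⟨j, hj⟩ := exists_eq_val_add_one (n := n) (k := i + 1 + 1) ⟨by omega, by omega⟩
  rw [hj, rho_val_add_one, rho_val_add_one, sigma_val_add_one, sigma_val_add_one, SemiconjBy,
    ← mul_assoc]
  exact PresentedGroup.mk_eq_mk_of_mul_inv_mem
    (Or.inl ⟨i, j, by omega, Or.inr (Or.inr (Or.inl rfl))⟩)

open DistinctPair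

/-- The pair `(i, i + 1)` of adjacent strands. -/
def adjPair (i : Fin (n - 1)) : DistinctPair (Fin n) :=
  ⟨(⟨i, by omega⟩, ⟨i + 1, by omega⟩), by simp⟩

theorem lift_images_eq_one_of_mem_uvbRels {r : FreeGroup (UVBGen n)} (hr : r ∈ uvbRels n) :
    FreeGroup.lift (Sum.elim (fun i => sigmaImage (adjPair i)) fun i => rhoImage (adjPair i)) r
      = 1 := by
  rcases hr with ⟨i, j, hij, h⟩ | ⟨i, j, hij, h⟩ | ⟨i, rfl⟩
  · have hi : (⟨i + 1, by omega⟩ : Fin n) = ⟨j, by omega⟩ := Fin.ext hij.symm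
    obtain ⟨h₁, h₂, h₃, h₄, h₅⟩ := braid_relations (a := (⟨i, by omega⟩ : Fin n))
      (b := ⟨j, by omega⟩) (c := ⟨j + 1, by omega⟩) (by simp; omega) (by simp) (by simp; omega)
    rcases h with rfl | rfl | rfl | rfl | rfl <;>
      simp only [map_mul, map_inv, mul_inv_eq_one, UVBGen.sg, UVBGen.rg, FreeGroup.lift_apply_of,
        Sum.elim_inl, Sum.elim_inr, adjPair, hi] <;> assumption
  · obtain ⟨h₁, h₂, h₃⟩ := far_relations (adjPair i).2 (adjPair j).2
      (by simp [adjPair]; omega) (by simp [adjPair]; omega) (by simp [adjPair]; omega)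
      (by simp [adjPair]; omega)
    rcases h with rfl | rfl | rfl <;>
      simp only [map_mul, map_inv, mul_inv_eq_one, UVBGen.sg, UVBGen.rg, FreeGroup.lift_apply_of,
        Sum.elim_inl, Sum.elim_inr] <;> assumption
  · simp only [map_mul, UVBGen.rg, FreeGroup.lift_apply_of, Sum.elim_inr, rhoImage_mul_self]

/-- The representation of `UVB n` that makes the `λ_{i,j}` the basis of a free abelian group
permuted by `S_n`. -/
def toSemidirect (n : ℕ) : UVB n →* PermSemidirect (Fin n) :=
  PresentedGroup.toGroup
    (f := Sum.elim (fun i => sigmaImage (adjPair i)) fun i => rhoImage (adjPair i))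
    fun _ => lift_images_eq_one_of_mem_uvbRels

theorem toSemidirect_sigma (i : Fin (n - 1)) :
    toSemidirect n (sigma n (i + 1)) = sigmaImage (adjPair i) := by
  rw [sigma_val_add_one]
  exact PresentedGroup.toGroup.of _

theorem toSemidirect_rho (i : Fin (n - 1)) :
    toSemidirect n (rho n (i + 1)) = rhoImage (adjPair i) := by
  rw [rho_val_add_one]
  exact PresentedGroup.toGroup.of _

/-- The homomorphism `ι`. -/
def toPerm (n : ℕ) : UVB n →* Perm (Fin n) :=
  SemidirectProduct.rightHom.comp (toSemidirect n)

theorem toPerm_sigma (i : Fin (n - 1)) :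
    toPerm n (sigma n (i + 1)) = swap ⟨i, by omega⟩ ⟨i + 1, by omega⟩ :=
  congrArg SemidirectProduct.right (toSemidirect_sigma i)

theorem toPerm_rho (i : Fin (n - 1)) :
    toPerm n (rho n (i + 1)) = swap ⟨i, by omega⟩ ⟨i + 1, by omega⟩ :=
  congrArg SemidirectProduct.right (toSemidirect_rho i)

theorem eq_toPerm_of_isIota {ι : UVB n →* Perm (Fin n)} (hι : IsIota n ι) : ι = toPerm n := by
  refine PresentedGroup.ext ?_
  rintro (i | i)
  · rw [← sigma_val_add_one, toPerm_sigma, (hι _ (by omega) (by omega)).1]; rfl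
  · rw [← rho_val_add_one, toPerm_rho, (hι _ (by omega) (by omega)).2]; rfl

theorem val_toPerm_rho {k : ℕ} (h1 : 1 ≤ k) (h2 : k < n) (a : Fin n) :
    (toPerm n (rho n k) a : ℕ) + 1 = swap k (k + 1) (a + 1) := by
  obtain ⟨i, rfl⟩ := exists_eq_val_add_one (n := n) ⟨h1, by omega⟩
  rw [toPerm_rho]
  simp only [Equiv.swap_apply_def, Fin.ext_iff, Nat.add_right_cancel_iff]
  split_ifs <;> simp

theorem B_self (i : ℕ) : B n i i = 1 := if_neg i.lt_irrefl

theorem B_succ {i j : ℕ} (h : i ≤ j) : B n i (j + 1) = rho n j * B n i j := by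
  obtain ⟨d, rfl⟩ := Nat.exists_eq_add_of_le h
  cases d with
  | zero => simp [B]
  | succ d => simp [B, add_assoc, List.range'_concat]

theorem rho_B_comm {i j k : ℕ} (hij : i ≤ j) (hjk : j < k) : Commute (rho n k) (B n i j) := by
  induction j, hij using Nat.le_induction with
  | base => exact B_self (n := n) i ▸ Commute.one_right _
  | succ j hj ih => exact B_succ hj ▸ (rho_comm (by omega)).mul_right (ih (by omega))

theorem rho_mul_B {i j k : ℕ} (h1 : 1 ≤ i) (hik : i ≤ k) (hkj : k + 2 ≤ j) (hj : j ≤ n) :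
    rho n k * B n i j = B n i j * rho n (k + 1) := by
  induction j, hkj using Nat.le_induction with
  | base =>
    rw [B_succ (by omega), B_succ hik, ← mul_assoc, ← mul_assoc,
      rho_braid (by omega) (by omega), mul_assoc, (rho_B_comm hik k.lt_succ_self).eq]
    simp only [mul_assoc]
  | succ j hkj ih =>
    rw [B_succ (by omega), ← mul_assoc, (rho_comm (by omega) : Commute (rho n k) (rho n j)).eq,
      mul_assoc, ih (by omega), mul_assoc]

/-- The subgroup `⟨ρ_k, …, ρ_{n-1}⟩` of `UVB n`. As `rho n m = 1` for `n ≤ m`, no upper bound on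
the indices is imposed. -/
def rhoTail (n k : ℕ) : Subgroup (UVB n) :=
  Subgroup.closure (rho n '' Set.Ici k)

theorem rho_mem_rhoTail {k m : ℕ} (h : k ≤ m) : rho n m ∈ rhoTail n k :=
  Subgroup.subset_closure (Set.mem_image_of_mem _ h)

theorem rhoTail_le_iff {k : ℕ} {H : Subgroup (UVB n)} :
    rhoTail n k ≤ H ↔ ∀ m, k ≤ m → rho n m ∈ H :=
  (Subgroup.closure_le _).trans Set.forall_mem_image

theorem rhoTail_eq_bot {k : ℕ} (h : n ≤ k) : rhoTail n k = ⊥ :=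
  (Subgroup.eq_bot_iff_forall _).mpr fun _ hx =>
    (rhoTail_le_iff (H := ⊥)).mpr (fun _ _ => Subgroup.mem_bot.mpr (rho_eq_one (by omega))) hx

theorem toPerm_apply_of_mem_rhoTail {k : ℕ} {x : UVB n} (hx : x ∈ rhoTail n k) {a : Fin n}
    (ha : a + 1 < k) : toPerm n x a = a := by
  suffices rhoTail n k ≤ (MulAction.stabilizer (Perm (Fin n)) a).comap (toPerm n) from this hx
  refine rhoTail_le_iff.mpr fun m hm => ?_
  by_cases hmn : m < n
  · refine Fin.ext (Nat.succ_injective ?_)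
    exact (val_toPerm_rho (by omega) hmn a).trans
      (Equiv.swap_apply_of_ne_of_ne (by omega) (by omega))
  · rw [rho_eq_one (by omega)]
    exact one_mem _

theorem val_toPerm_B {k j : ℕ} (hk : 1 ≤ k) (hkj : k ≤ j) (hj : j ≤ n) {a : Fin n}
    (ha : a + 1 = k) : (toPerm n (B n k j) a : ℕ) + 1 = j := by
  induction j, hkj using Nat.le_induction with
  | base => rw [B_self, map_one, Perm.one_apply, ha]
  | succ j hkj ih =>
    rw [B_succ hkj, map_mul, Perm.mul_apply, val_toPerm_rho (by omega) (by omega),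
      ih (by omega), Equiv.swap_apply_left]

theorem exists_rho_mul_B_mul_eq {k j m : ℕ} (hk : 1 ≤ k) (hkj : k ≤ j) (hj : j ≤ n) (hkm : k ≤ m)
    {u : UVB n} (hu : u ∈ rhoTail n (k + 1)) :
    ∃ l, k ≤ l ∧ l ≤ n ∧ ∃ v ∈ rhoTail n (k + 1), rho n m * (B n k j * u) = B n k l * v := by
  by_cases hmn : n ≤ m
  · exact ⟨j, hkj, hj, u, hu, by rw [rho_eq_one (by omega), one_mul]⟩
  obtain hjm | rfl | hmj := lt_trichotomy j m
  · refine ⟨j, hkj, hj, rho n m * u, mul_mem (rho_mem_rhoTail (by omega)) hu, ?_⟩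
    rw [← mul_assoc, (rho_B_comm hkj hjm).eq, mul_assoc]
  · exact ⟨j + 1, by omega, by omega, u, hu, by rw [B_succ hkj, mul_assoc]⟩
  obtain rfl | hmj : m + 1 = j ∨ m + 2 ≤ j := by omega
  · exact ⟨m, hkm, by omega, u, hu, by simp only [B_succ hkm, ← mul_assoc, rho_mul_self, one_mul]⟩
  · refine ⟨j, hkj, hj, rho n (m + 1) * u, mul_mem (rho_mem_rhoTail (by omega)) hu, ?_⟩
    rw [← mul_assoc, rho_mul_B hk hkm hmj hj, mul_assoc]

theorem exists_eq_B_mul {k : ℕ} (hk : 1 ≤ k) (hkn : k ≤ n) {x : UVB n} (hx : x ∈ rhoTail n k) :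
    ∃ j, k ≤ j ∧ j ≤ n ∧ ∃ u ∈ rhoTail n (k + 1), x = B n k j * u := by
  induction hx using Subgroup.closure_induction_left with
  | one => exact ⟨k, le_rfl, hkn, 1, one_mem _, by rw [B_self, one_mul]⟩
  | mul_left y hy x hx ih =>
    obtain ⟨m, hm, rfl⟩ := hy
    obtain ⟨j, hkj, hj, u, hu, rfl⟩ := ih
    exact exists_rho_mul_B_mul_eq hk hkj hj hm hu
  | inv_mul_cancel y hy x hx ih =>
    obtain ⟨m, hm, rfl⟩ := hy
    obtain ⟨j, hkj, hj, u, hu, rfl⟩ := ih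
    rw [rho_inv]
    exact exists_rho_mul_B_mul_eq hk hkj hj hm hu

theorem mem_rhoTail_of_forall_toPerm_apply {k : ℕ} (hk : 1 ≤ k) {x : UVB n}
    (hx : x ∈ rhoTail n 1) (hfix : ∀ a : Fin n, a + 1 < k → toPerm n x a = a) :
    x ∈ rhoTail n k := by
  induction k, hk using Nat.le_induction with
  | base => exact hx
  | succ k hk ih =>
    have hxk : x ∈ rhoTail n k := ih fun a ha => hfix a (by omega)
    by_cases hkn : n < k
    · rw [rhoTail_eq_bot hkn.le, Subgroup.mem_bot] at hxk
      exact hxk ▸ one_mem _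
    obtain ⟨j, hkj, hj, u, hu, rfl⟩ := exists_eq_B_mul hk (by omega) hxk
    -- `x` fixes the strand `k`, while its coset representative `B_{k,j}` moves `k` to `j`.
    let a : Fin n := ⟨k - 1, by omega⟩
    have ha : (a : ℕ) + 1 = k := Nat.sub_add_cancel hk
    have hBa := hfix a (by omega)
    rw [map_mul, Perm.mul_apply, toPerm_apply_of_mem_rhoTail hu (by omega)] at hBa
    obtain rfl : k = j := by rw [← val_toPerm_B hk hkj hj ha, hBa, ha]
    rwa [B_self, one_mul]

/-- The Coxeter relations present `S_n`: no other relation holds between the `ρ_k`. -/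
theorem eq_one_of_toPerm_eq_one {x : UVB n} (hx : x ∈ rhoTail n 1) (h : toPerm n x = 1) :
    x = 1 := by
  have : x ∈ rhoTail n (n + 1) :=
    mem_rhoTail_of_forall_toPerm_apply (by omega) hx fun a _ => by rw [h, Perm.one_apply]
  rwa [rhoTail_eq_bot n.le_succ, Subgroup.mem_bot] at this

theorem lam_add_one_right_self (i : ℕ) : lam n i (i + 1) = rho n i * (sigma n i)⁻¹ := by
  simp [lam]

theorem lam_add_one_left_self (i : ℕ) :
    lam n (i + 1) i = rho n i * lam n i (i + 1) * rho n i := by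
  simp [lam, ← mul_assoc, rho_mul_self]

theorem lam_add_one_right {i j : ℕ} (h : i < j) :
    lam n i (j + 1) = rho n j * lam n i j * rho n j := by
  rw [lam, lam, if_pos h, if_pos (by omega), Nat.add_sub_cancel, range'_succ_sub_eq_append h]
  simp [mul_assoc]

theorem lam_add_one_left {i j : ℕ} (h : i < j) :
    lam n (j + 1) i = rho n j * lam n j i * rho n j := by
  rw [lam, lam, if_neg h.not_gt, if_pos h, if_neg (by omega), if_pos (by omega),
    Nat.add_sub_cancel, range'_succ_sub_eq_append h]
  simp [mul_assoc]

theorem lam_add_one_add_two {i : ℕ} (h1 : 1 ≤ i) (h2 : i + 1 < n) :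
    lam n (i + 1) (i + 2) = rho n i * lam n i (i + 2) * rho n i := by
  symm
  calc rho n i * lam n i (i + 2) * rho n i
      = rho n i * rho n (i + 1) * rho n i * (sigma n i)⁻¹ * rho n (i + 1) * rho n i := by
        rw [lam_add_one_right i.lt_succ_self, lam_add_one_right_self]
        simp only [mul_assoc]
    _ = rho n (i + 1) * (rho n i * rho n (i + 1) * (sigma n i)⁻¹) * rho n (i + 1) * rho n i := by
        rw [rho_braid h1 h2]
        simp only [mul_assoc]
    _ = rho n (i + 1) * (sigma n (i + 1))⁻¹ * (rho n i * (rho n (i + 1) * rho n (i + 1)))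
          * rho n i := by
        rw [(semiconjBy_rho_mul_rho h1 h2).inv_right.eq]
        simp only [mul_assoc]
    _ = lam n (i + 1) (i + 2) := by
        rw [rho_mul_self, mul_one, mul_assoc, rho_mul_self, mul_one, lam_add_one_right_self]

/-- The pair `(1, 2)` of strands, from which the symmetric group reaches every other pair. -/
def basePair (hn : 2 ≤ n) : DistinctPair (Fin n) :=
  adjPair ⟨0, by omega⟩

/-- The element `λ_{i,j}`, indexed by the pair `p = (i, j)`. -/
def lamPair (p : DistinctPair (Fin n)) : UVB n :=
  lam n (p.1.1 + 1) (p.1.2 + 1)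

/-- Conjugation by a word in the `ρ_k` that moves the strands `1, 2` to `i, j` takes `λ_{1,2}` to
`λ_{i,j}`. -/
def IsRhoConj (hn : 2 ≤ n) (i j : ℕ) : Prop :=
  ∃ w ∈ rhoTail n 1, w * lam n 1 2 * w⁻¹ = lam n i j ∧
    (toPerm n w (basePair hn).1.1 : ℕ) + 1 = i ∧ (toPerm n w (basePair hn).1.2 : ℕ) + 1 = j

theorem isRhoConj_one_two (hn : 2 ≤ n) : IsRhoConj hn 1 2 :=
  ⟨1, one_mem _, by simp, by simp [basePair, adjPair]⟩

theorem IsRhoConj.conj_rho {hn : 2 ≤ n} {i j i' j' k : ℕ} (h : IsRhoConj hn i j) (hk : 1 ≤ k)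
    (hkn : k < n) (hlam : lam n i' j' = rho n k * lam n i j * rho n k)
    (hi : swap k (k + 1) i = i') (hj : swap k (k + 1) j = j') : IsRhoConj hn i' j' := by
  obtain ⟨w, hw, hconj, rfl, rfl⟩ := h
  refine ⟨rho n k * w, mul_mem (rho_mem_rhoTail hk) hw, ?_, ?_, ?_⟩
  · rw [hlam, ← hconj, mul_inv_rev, rho_inv]
    simp only [mul_assoc]
  all_goals rwa [map_mul, Perm.mul_apply, val_toPerm_rho hk hkn]

theorem isRhoConj_add_one (hn : 2 ≤ n) {i : ℕ} (h1 : 1 ≤ i) (hin : i < n) :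
    IsRhoConj hn i (i + 1) := by
  induction i, h1 using Nat.le_induction with
  | base => exact isRhoConj_one_two hn
  | succ i hi ih =>
    have : IsRhoConj hn i (i + 2) :=
      (ih (by omega)).conj_rho (by omega) hin (lam_add_one_right i.lt_succ_self)
        (Equiv.swap_apply_of_ne_of_ne (by omega) (by omega)) (Equiv.swap_apply_left _ _)
    exact this.conj_rho hi (by omega) (lam_add_one_add_two hi hin) (Equiv.swap_apply_left _ _)
      (Equiv.swap_apply_of_ne_of_ne (by omega) (by omega))

theorem isRhoConj_of_lt (hn : 2 ≤ n) {i j : ℕ} (h1 : 1 ≤ i) (hij : i < j) (hj : j ≤ n) :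
    IsRhoConj hn i j ∧ IsRhoConj hn j i := by
  induction j, hij using Nat.le_induction with
  | base =>
    have h := isRhoConj_add_one hn h1 (by omega)
    exact ⟨h, h.conj_rho h1 (by omega) (lam_add_one_left_self i) (Equiv.swap_apply_left _ _)
      (Equiv.swap_apply_right _ _)⟩
  | succ j hij ih =>
    have hi : swap j (j + 1) i = i := Equiv.swap_apply_of_ne_of_ne (by omega) (by omega)
    have hj' : swap j (j + 1) j = j + 1 := Equiv.swap_apply_left _ _
    obtain ⟨hij', hji'⟩ := ih (by omega)
    exact ⟨hij'.conj_rho (by omega) (by omega) (lam_add_one_right hij) hi hj',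
      hji'.conj_rho (by omega) (by omega) (lam_add_one_left hij) hj' hi⟩

theorem exists_conj_lamPair_basePair (hn : 2 ≤ n) (p : DistinctPair (Fin n)) :
    ∃ w ∈ rhoTail n 1, toPerm n w • basePair hn = p ∧
      w * lamPair (basePair hn) * w⁻¹ = lamPair p := by
  have h : IsRhoConj hn (p.1.1 + 1) (p.1.2 + 1) := by
    rcases lt_or_gt_of_ne p.2 with h | h
    · exact (isRhoConj_of_lt hn (by omega) (Nat.succ_lt_succ h) (by omega)).1
    · exact (isRhoConj_of_lt hn (by omega) (Nat.succ_lt_succ h) (by omega)).2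
  obtain ⟨w, hw, hconj, hi, hj⟩ := h
  exact ⟨w, hw, Subtype.ext (Prod.ext (Fin.ext (Nat.succ_injective hi))
    (Fin.ext (Nat.succ_injective hj))), hconj⟩

theorem commute_lamPair_basePair (hn : 2 ≤ n) {x : UVB n} (hx : x ∈ rhoTail n 1)
    (hfix : toPerm n x • basePair hn = basePair hn) : Commute x (lamPair (basePair hn)) := by
  have hx₃ : x ∈ rhoTail n 3 := by
    refine mem_rhoTail_of_forall_toPerm_apply (by omega) hx fun a ha => ?_
    obtain h | h : (a : ℕ) = 0 ∨ (a : ℕ) = 1 := by omega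
    · obtain rfl : a = (basePair hn).1.1 := Fin.ext h
      exact congrArg (fun p => p.1.1) hfix
    · obtain rfl : a = (basePair hn).1.2 := Fin.ext h
      exact congrArg (fun p => p.1.2) hfix
  have hcomm : rhoTail n 3 ≤ Subgroup.centralizer {lamPair (basePair hn)} := by
    refine rhoTail_le_iff.mpr fun m hm => Subgroup.mem_centralizer_singleton_iff.mpr ?_
    change rho n m * lam n 1 2 = lam n 1 2 * rho n m
    rw [lam_add_one_right_self]
    exact ((rho_comm (by omega)).mul_right (sigma_rho_comm (by omega)).symm.inv_right).eq
  exact Subgroup.mem_centralizer_singleton_iff.mp (hcomm hx₃)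

theorem conj_lamPair (hn : 2 ≤ n) {r : UVB n} (hr : r ∈ rhoTail n 1) (p : DistinctPair (Fin n)) :
    r * lamPair p * r⁻¹ = lamPair (toPerm n r • p) := by
  obtain ⟨v, hv, rfl, hvconj⟩ := exists_conj_lamPair_basePair hn p
  obtain ⟨w, hw, hwp, hwconj⟩ :=
    exists_conj_lamPair_basePair hn (toPerm n r • toPerm n v • basePair hn)
  -- `r * v` and `w` carry the base pair to the same pair, so `w⁻¹ * r * v` stabilizes it.
  have hcomm : Commute (w⁻¹ * r * v) (lamPair (basePair hn)) := by
    refine commute_lamPair_basePair hn (mul_mem (mul_mem (inv_mem hw) hr) hv) ?_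
    rw [map_mul, map_mul, mul_smul, mul_smul, ← hwp, map_inv, inv_smul_smul]
  rw [← hvconj, ← hwconj]
  calc r * (v * lamPair (basePair hn) * v⁻¹) * r⁻¹
      = w * ((w⁻¹ * r * v) * lamPair (basePair hn)) * v⁻¹ * r⁻¹ := by group
    _ = w * lamPair (basePair hn) * w⁻¹ := by rw [hcomm.eq]; group

theorem toSemidirect_of_mem_rhoTail {x : UVB n} (hx : x ∈ rhoTail n 1) :
    toSemidirect n x = SemidirectProduct.inr (toPerm n x) := by
  suffices Set.EqOn (toSemidirect n) (SemidirectProduct.inr.comp (toPerm n)) (rhoTail n 1) from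
    this hx
  refine MonoidHom.eqOn_closure ?_
  rintro _ ⟨k, hk : 1 ≤ k, rfl⟩
  by_cases hkn : k ≤ n - 1
  · obtain ⟨i, rfl⟩ := exists_eq_val_add_one (n := n) ⟨hk, hkn⟩
    simp only [MonoidHom.comp_apply, toSemidirect_rho, toPerm_rho]
    rfl
  · simp only [rho_eq_one (n := n) (k := k) (by omega), map_one]

theorem toSemidirect_lamPair (hn : 2 ≤ n) (p : DistinctPair (Fin n)) :
    toSemidirect n (lamPair p) = SemidirectProduct.inl (MulFreeAb.of p) := by
  have hbase : toSemidirect n (lamPair (basePair hn))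
      = SemidirectProduct.inl (MulFreeAb.of (basePair hn)) := by
    change toSemidirect n (lam n 1 2) = _
    let i : Fin (n - 1) := ⟨0, by omega⟩
    rw [lam_add_one_right_self, map_mul, map_inv, mul_inv_eq_iff_eq_mul]
    refine (toSemidirect_rho i).trans (Eq.trans ?_ (congrArg _ (toSemidirect_sigma i).symm))
    ext <;> simp [rhoImage, sigmaImage, basePair, i]
  obtain ⟨w, hw, rfl, hconj⟩ := exists_conj_lamPair_basePair hn p
  rw [← hconj, map_mul, map_mul, map_inv, hbase, toSemidirect_of_mem_rhoTail hw, ← map_inv,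
    ← SemidirectProduct.inl_aut, MulFreeAb.action_of]

theorem lamPair_mem_ker (hn : 2 ≤ n) (p : DistinctPair (Fin n)) : lamPair p ∈ (toPerm n).ker := by
  rw [MonoidHom.mem_ker, toPerm, MonoidHom.comp_apply, toSemidirect_lamPair hn,
    SemidirectProduct.rightHom_inl]

theorem closure_lamPair_sup_rhoTail :
    Subgroup.closure (Set.range (lamPair (n := n))) ⊔ rhoTail n 1 = ⊤ := by
  refine top_le_iff.mp ((PresentedGroup.closure_range_of (uvbRels n)).ge.trans ?_)
  refine (Subgroup.closure_le _).mpr ?_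
  rintro _ ⟨i | i, rfl⟩
  · have hsigma : sigma n (i + 1) = (lamPair (adjPair i))⁻¹ * rho n (i + 1) := by
      change _ = (lam n (i + 1) (i + 1 + 1))⁻¹ * _
      rw [lam_add_one_right_self, mul_inv_rev, inv_inv, inv_mul_cancel_right]
    rw [← sigma_val_add_one, hsigma]
    exact Subgroup.mul_mem_sup (inv_mem (Subgroup.subset_closure ⟨_, rfl⟩))
      (rho_mem_rhoTail (by omega))
  · rw [← rho_val_add_one]
    exact Subgroup.mem_sup_right (rho_mem_rhoTail (by omega))

theorem rhoTail_le_normalizer (hn : 2 ≤ n) :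
    rhoTail n 1 ≤ Subgroup.normalizer (Subgroup.closure (Set.range (lamPair (n := n)))) := by
  refine Subgroup.le_normalizer_closure_iff.mpr ?_
  rintro r hr _ ⟨p, rfl⟩
  exact Subgroup.subset_closure ⟨_, (conj_lamPair hn hr p).symm⟩

theorem closure_range_lamPair (hn : 2 ≤ n) :
    Subgroup.closure (Set.range lamPair) = (toPerm n).ker := by
  have hle : Subgroup.closure (Set.range lamPair) ≤ (toPerm n).ker :=
    (Subgroup.closure_le _).mpr (Set.range_subset_iff.mpr (lamPair_mem_ker hn))
  exact hle.antisymm <| ker_le_of_sup_eq_top _ hle (rhoTail_le_normalizer hn)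
    closure_lamPair_sup_rhoTail fun _ => eq_one_of_toPerm_eq_one

theorem closure_range_lamPair_mk_eq_top (hn : 2 ≤ n) :
    Subgroup.closure (Set.range fun p : DistinctPair (Fin n) =>
      (⟨lamPair p, lamPair_mem_ker hn p⟩ : (toPerm n).ker)) = ⊤ := by
  refine Subgroup.map_injective (toPerm n).ker.subtype_injective ?_
  rw [MonoidHom.map_closure, ← Set.range_comp, ← MonoidHom.range_eq_map, Subgroup.range_subtype]
  exact closure_range_lamPair hn

end UVB

/-- For `n ≥ 2`, the abelianization `UVP n/[UVP n, UVP n]` is a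
free abelian group of rank n(n−1), freely generated by the images of the elements
λ_{i,j}, 1 ≤ i ≠ j ≤ n. -/
theorem statement14 (n : ℕ) (hn : 2 ≤ n)
    (ι : UVB n →* Equiv.Perm (Fin n)) (hι : IsIota n ι)
    (hlam : ∀ (i j : ℕ) (hi1 : 1 ≤ i) (hi2 : i ≤ n) (hj1 : 1 ≤ j) (hj2 : j ≤ n)
      (hij : i ≠ j), UVB.lam n i j ∈ ι.ker) :
    Nat.card {p : Fin n × Fin n // p.1 ≠ p.2} = n * (n - 1) ∧
    ∃ e : Abelianization ↥ι.ker ≃*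
        Multiplicative (FreeAbelianGroup {p : Fin n × Fin n // p.1 ≠ p.2}),
      ∀ p : {p : Fin n × Fin n // p.1 ≠ p.2},
        e (Abelianization.of
            (⟨UVB.lam n (p.1.1.val + 1) (p.1.2.val + 1),
              hlam _ _ (by omega) (by have := p.1.1.isLt; omega)
                (by omega) (by have := p.1.2.isLt; omega) (val_add_one_ne p.2)⟩ : ↥ι.ker)) =
          Multiplicative.ofAdd (FreeAbelianGroup.of p) := by
  obtain rfl := UVB.eq_toPerm_of_isIota hι
  refine ⟨(DistinctPair.natCard_eq (Fin n)).trans (by rw [Nat.card_fin]), ?_⟩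
  exact exists_abelianization_mulEquiv_mulFreeAb (UVB.closure_range_lamPair_mk_eq_top hn)
    (leftOnKer (UVB.toSemidirect n)) fun p =>
      congrArg SemidirectProduct.left (UVB.toSemidirect_lamPair hn p)
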